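/- arXiv:1409.5767 — 3 statements merged into one kernel-verified Lean document; each statement's English description precedes it below -/
import Mathlib

section
/- Let n ≥ 1 and let S be an n × n matrix with natural-number entries, each entry being 0 or 1. For a positive integer m let θ(m) denote the number of rotation orbits of aperiodic closed walks of length m. Then for every positive integer N the following identity holds in ℚ: θ(N) = Tr(S^N)/N − ∑_{g | N, g ≠ 1} (1/g) · θ(N/g), the sum running over the positive divisors g of N with g ≠ 1. -/
/-- A closed walk of length `N` with respect to an `n × n` zero-one matrix `S`:
a function `f : ZMod N → Fin n` such that consecutive vertices are adjacent. -/
def IsClosedWalk {n : ℕ} (S : Matrix (Fin n) (Fin n) ℕ) {N : ℕ}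
    (f : ZMod N → Fin n) : Prop :=
  ∀ k : ZMod N, S (f k) (f (k + 1)) = 1

/-- A closed walk is aperiodic if no nonzero rotation fixes it. -/
def IsAperiodic {n N : ℕ} (f : ZMod N → Fin n) : Prop :=
  ∀ d : ZMod N, d ≠ 0 → ∃ k : ZMod N, f (k + d) ≠ f k

/-- The type of aperiodic closed walks of length `N`. -/
def AperiodicWalk {n : ℕ} (S : Matrix (Fin n) (Fin n) ℕ) (N : ℕ) : Type :=
  {f : ZMod N → Fin n // IsClosedWalk S f ∧ IsAperiodic f}

/-- The rotation action of the additive group `ZMod N` on aperiodic closed walks: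
`d` sends `f` to `k ↦ f (k + d)`. -/
def rotAction {n : ℕ} (S : Matrix (Fin n) (Fin n) ℕ) (N : ℕ)
    (d : ZMod N) (f : AperiodicWalk S N) : AperiodicWalk S N :=
  ⟨fun k => f.1 (k + d), by
    obtain ⟨hw, ha⟩ := f.2
    constructor
    · intro k; simpa [add_right_comm] using hw (k + d)
    · intro e he
      obtain ⟨k, hk⟩ := ha e he
      exact ⟨k - d, by simpa [add_right_comm, sub_add_cancel] using hk⟩⟩

/-- Two aperiodic closed walks are equivalent if one is a rotation of the other. -/
def RotRel {n : ℕ} (S : Matrix (Fin n) (Fin n) ℕ) (N : ℕ)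
    (f g : AperiodicWalk S N) : Prop :=
  ∃ d : ZMod N, g = rotAction S N d f

/-- `theta S m` is the number of rotation orbits of aperiodic closed walks of
length `m` with respect to the matrix `S`. -/
noncomputable def theta {n : ℕ} (S : Matrix (Fin n) (Fin n) ℕ) (m : ℕ) : ℕ :=
  Nat.card (Quot (RotRel S m))

/-!
Unrolling a closed walk of length `N` gives a point of period `N` of the shift on the infinite walks
of `S`, and the walk is aperiodic exactly when `N` is the minimal period. Sorting the points of
period `N` by their minimal period `m`, a divisor of `N`, shows that `Tr (S ^ N)`, the number of
closed walks of length `N`, is the sum over `m ∣ N` of the number of aperiodic closed walks of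
length `m`. Rotation acts freely on the latter, so there are `m * θ(m)` of them. Dividing
`Tr (S ^ N) = ∑ m ∣ N, m * θ(m)` by `N` and isolating the term `m = N` gives the recursion.
-/

open Function Set

section PeriodicPoints

variable {α : Type*}

theorem ncard_inter_ptsOfPeriod (T : α → α) {s : Set α} {N : ℕ} (hN : N ≠ 0)
    (hfin : (s ∩ ptsOfPeriod T N).Finite) :
    (s ∩ ptsOfPeriod T N).ncard =
      ∑ m ∈ N.divisors, (s ∩ {x | minimalPeriod T x = m}).ncard := by
  have hmaps : ∀ x ∈ hfin.toFinset, minimalPeriod T x ∈ N.divisors := fun x hx =>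
    Nat.mem_divisors.2 ⟨((hfin.mem_toFinset.1 hx).2 : IsPeriodicPt T N x).minimalPeriod_dvd, hN⟩
  rw [ncard_eq_toFinset_card _ hfin, Finset.card_eq_sum_card_fiberwise hmaps]
  refine Finset.sum_congr rfl fun m hm => ?_
  rw [← ncard_coe_finset]
  congr 1
  ext x
  have hper : minimalPeriod T x = m → IsPeriodicPt T N x := fun h =>
    isPeriodicPt_iff_minimalPeriod_dvd.2 (h ▸ Nat.dvd_of_mem_divisors hm)
  simp only [Finset.coe_filter, Finite.mem_toFinset, mem_inter_iff, mem_ptsOfPeriod, mem_ofPred_eq]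
  tauto

/-- The left shift on one-sided sequences. Its periodic points model closed walks of all lengths
inside a single space. -/
def shift (x : ℕ → α) : ℕ → α := fun k => x (k + 1)

theorem shift_iterate_apply (x : ℕ → α) (j k : ℕ) : shift^[j] x k = x (k + j) := by
  induction j generalizing k with
  | zero => rfl
  | succ j ih => rw [iterate_succ_apply', shift, ih, add_right_comm, add_assoc]

theorem isPeriodicPt_shift_iff {x : ℕ → α} {j : ℕ} : IsPeriodicPt shift j x ↔ Periodic x j := by
  simp only [IsPeriodicPt, IsFixedPt, funext_iff, shift_iterate_apply, Periodic]

/-- The periodic sequence `f 0, f 1, f 2, …` obtained by unrolling a function on `ZMod m`. -/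
def unroll {m : ℕ} (f : ZMod m → α) : ℕ → α := fun k => f k

variable {m : ℕ} [NeZero m]

theorem unroll_injective : Injective (unroll : (ZMod m → α) → ℕ → α) := fun f g h =>
  funext fun k => by simpa only [unroll, ZMod.natCast_zmod_val] using congrFun h k.val

theorem periodic_unroll_iff {f : ZMod m → α} {d : ℕ} :
    Periodic (unroll f) d ↔ Periodic f (d : ZMod m) := by
  constructor <;> intro h k
  · simpa only [unroll, Nat.cast_add, ZMod.natCast_zmod_val] using h k.val
  · simpa only [unroll, Nat.cast_add] using h k

theorem periodic_unroll (f : ZMod m → α) : Periodic (unroll f) m :=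
  periodic_unroll_iff.2 fun k => by rw [ZMod.natCast_self, add_zero]

theorem range_unroll : range (unroll : (ZMod m → α) → ℕ → α) = ptsOfPeriod shift m := by
  ext x
  rw [mem_ptsOfPeriod, isPeriodicPt_shift_iff]
  constructor
  · rintro ⟨f, rfl⟩
    exact periodic_unroll f
  · intro hx
    refine ⟨fun k => x k.val, funext fun k => ?_⟩
    rw [unroll, ZMod.val_natCast, hx.map_mod_nat]

theorem finite_ptsOfPeriod_shift [Finite α] : (ptsOfPeriod (shift (α := α)) m).Finite :=
  range_unroll (α := α) (m := m) ▸ finite_range _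

theorem ncard_unroll_preimage {t : Set (ℕ → α)} (ht : t ⊆ ptsOfPeriod shift m) :
    (unroll ⁻¹' t : Set (ZMod m → α)).ncard = t.ncard :=
  ncard_preimage_of_injective_subset_range unroll_injective (range_unroll (m := m) ▸ ht)

theorem minimalPeriod_shift_unroll_dvd_iff {f : ZMod m → α} {d : ℕ} :
    minimalPeriod shift (unroll f) ∣ d ↔ Periodic f (d : ZMod m) := by
  rw [← isPeriodicPt_iff_minimalPeriod_dvd, isPeriodicPt_shift_iff, periodic_unroll_iff]

theorem minimalPeriod_shift_unroll_eq_iff {n : ℕ} {f : ZMod m → Fin n} :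
    minimalPeriod shift (unroll f) = m ↔ IsAperiodic f := by
  constructor
  · intro hmin d hd
    by_contra! hper
    rw [← ZMod.natCast_zmod_val d] at hd hper
    have hdvd := minimalPeriod_shift_unroll_dvd_iff.2 hper
    rw [hmin, ← ZMod.natCast_eq_zero_iff] at hdvd
    exact hd hdvd
  · intro hf
    refine Nat.dvd_antisymm (isPeriodicPt_shift_iff.2 (periodic_unroll f)).minimalPeriod_dvd ?_
    rw [← ZMod.natCast_eq_zero_iff]
    by_contra hne
    obtain ⟨k, hk⟩ := hf _ hne
    exact hk (minimalPeriod_shift_unroll_dvd_iff.1 dvd_rfl k)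

end PeriodicPoints

section ClosedWalks

/-- The one-sided infinite walks with respect to `S`: the subshift of finite type with transition
matrix `S`. -/
def infiniteWalks {ι : Type*} (S : Matrix ι ι ℕ) : Set (ℕ → ι) :=
  {x | ∀ k, S (x k) (x (k + 1)) = 1}

variable {n : ℕ} (S : Matrix (Fin n) (Fin n) ℕ) (m : ℕ) [NeZero m]

variable {S m} in
theorem unroll_mem_infiniteWalks_iff {f : ZMod m → Fin n} :
    unroll f ∈ infiniteWalks S ↔ IsClosedWalk S f := by
  constructor <;> intro h k
  · simpa only [unroll, Nat.cast_add, Nat.cast_one, ZMod.natCast_zmod_val] using h k.val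
  · simpa only [unroll, Nat.cast_add, Nat.cast_one] using h k

theorem ncard_closedWalks_eq_ncard_ptsOfPeriod :
    {f : ZMod m → Fin n | IsClosedWalk S f}.ncard =
      (infiniteWalks S ∩ ptsOfPeriod shift m).ncard := by
  rw [← ncard_unroll_preimage inter_subset_right, preimage_inter, ← range_unroll,
    preimage_range, inter_univ]
  simp only [preimage, unroll_mem_infiniteWalks_iff]

theorem card_aperiodicWalk_eq_ncard_minimalPeriod :
    Nat.card (AperiodicWalk S m) =
      (infiniteWalks S ∩ {x | minimalPeriod shift x = m}).ncard := by
  have hsub : infiniteWalks S ∩ {x | minimalPeriod shift x = m} ⊆ ptsOfPeriod shift m :=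
    fun x hx => isPeriodicPt_iff_minimalPeriod_dvd.2 hx.2.dvd
  rw [← ncard_unroll_preimage hsub]
  simp only [preimage, mem_inter_iff, unroll_mem_infiniteWalks_iff, mem_ofPred_eq,
    minimalPeriod_shift_unroll_eq_iff]
  rfl

theorem ncard_closedWalks_eq_sum_card_aperiodicWalk :
    {f : ZMod m → Fin n | IsClosedWalk S f}.ncard =
      ∑ d ∈ m.divisors, Nat.card (AperiodicWalk S d) := by
  rw [ncard_closedWalks_eq_ncard_ptsOfPeriod, ncard_inter_ptsOfPeriod _ (NeZero.ne m)
    (finite_ptsOfPeriod_shift.subset inter_subset_right)]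
  refine Finset.sum_congr rfl fun d hd => ?_
  have : NeZero d := ⟨(Nat.pos_of_mem_divisors hd).ne'⟩
  exact (card_aperiodicWalk_eq_ncard_minimalPeriod S d).symm

end ClosedWalks

section Rotation

theorem card_eq_card_mul_card_orbits (G X : Type*) [AddGroup G] [AddAction G X]
    [IsCancelVAdd G X] :
    Nat.card X = Nat.card G * Nat.card (Quotient (AddAction.orbitRel G X)) := by
  have hfree : ∀ x : X, AddAction.stabilizer G x = ⊥ := IsCancelVAdd.stabilizer_eq_bot
  rw [Nat.card_congr (AddAction.selfEquivOrbitsQuotientProd hfree), Nat.card_prod, mul_comm]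

variable {n : ℕ} (S : Matrix (Fin n) (Fin n) ℕ) (m : ℕ)

instance : AddAction (ZMod m) (AperiodicWalk S m) where
  vadd := rotAction S m
  zero_vadd f := Subtype.ext (funext fun k => congrArg f.1 (add_zero k))
  add_vadd d e f := Subtype.ext (funext fun k => congrArg f.1 (by abel))

instance : IsCancelVAdd (ZMod m) (AperiodicWalk S m) where
  right_cancel' d e f h := by
    by_contra hde
    obtain ⟨k, hk⟩ := f.2.2 (d - e) (sub_ne_zero.2 hde)
    have hrot : f.1 (k - e + d) = f.1 (k - e + e) := congrFun (congrArg Subtype.val h) (k - e)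
    rw [sub_add_cancel, sub_add_eq_add_sub, add_sub_assoc] at hrot
    exact hk hrot

theorem theta_eq_card_orbits :
    theta S m = Nat.card (Quotient (AddAction.orbitRel (ZMod m) (AperiodicWalk S m))) :=
  Nat.card_congr <| Quot.congrRight fun _ _ =>
    (exists_congr fun _ => eq_comm).trans (AddAction.orbitRel _ _).comm'

theorem card_aperiodicWalk_eq_mul_theta : Nat.card (AperiodicWalk S m) = m * theta S m := by
  rw [card_eq_card_mul_card_orbits (ZMod m), Nat.card_zmod, theta_eq_card_orbits]

end Rotation

section Trace

variable {R ι : Type*} [CommSemiring R] [Fintype ι] [DecidableEq ι]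

-- The walk `i, p 0, …, p (N - 1), j` has sources `Fin.cons i p` and targets `Fin.snoc p j`.
theorem matrix_pow_succ_apply_eq_sum_prod (A : Matrix ι ι R) (N : ℕ) (i j : ι) :
    (A ^ (N + 1)) i j = ∑ p : Fin N → ι, ∏ k : Fin (N + 1),
      A ((Fin.cons i p : Fin (N + 1) → ι) k) ((Fin.snoc p j : Fin (N + 1) → ι) k) := by
  induction N generalizing i with
  | zero => simp [Fin.snoc]
  | succ N ih =>
    rw [pow_succ', Matrix.mul_apply, ← (Fin.consEquiv fun _ => ι).sum_comp,
      Fintype.sum_prod_type]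
    refine Finset.sum_congr rfl fun a _ => ?_
    rw [ih, Finset.mul_sum]
    refine Finset.sum_congr rfl fun p _ => ?_
    rw [Fin.prod_univ_succ (n := N + 1)]
    simp [Fin.consEquiv, ← Fin.cons_snoc_eq_snoc_cons]

theorem trace_pow_eq_sum_prod (A : Matrix ι ι R) (N : ℕ) [NeZero N] :
    (A ^ N).trace = ∑ f : ZMod N → ι, ∏ k, A (f k) (f (k + 1)) := by
  obtain ⟨N, rfl⟩ := Nat.exists_eq_succ_of_ne_zero (NeZero.ne N)
  change _ = ∑ f : Fin (N + 1) → ι, ∏ k, A (f k) (f (k + 1))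
  rw [← (Fin.consEquiv fun _ => ι).sum_comp, Fintype.sum_prod_type]
  simp [Matrix.trace, matrix_pow_succ_apply_eq_sum_prod, Fin.snoc_eq_cons_rotate, Fin.consEquiv]

variable {n : ℕ} {S : Matrix (Fin n) (Fin n) ℕ}

theorem trace_pow_eq_ncard_closedWalks (hS : ∀ i j, S i j = 0 ∨ S i j = 1) (N : ℕ) [NeZero N] :
    (S ^ N).trace = {f : ZMod N → Fin n | IsClosedWalk S f}.ncard := by
  classical
  rw [trace_pow_eq_sum_prod, ncard_eq_toFinset_card', toFinset_ofPred, Finset.card_filter]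
  refine Finset.sum_congr rfl fun f _ => ?_
  split_ifs with hf
  · exact Finset.prod_eq_one fun k _ => hf k
  · obtain ⟨k, hk⟩ := not_forall.1 hf
    exact Finset.prod_eq_zero (Finset.mem_univ k) ((hS _ _).resolve_right hk)

theorem trace_pow_eq_sum_mul_theta (hS : ∀ i j, S i j = 0 ∨ S i j = 1) (N : ℕ) [NeZero N] :
    (S ^ N).trace = ∑ m ∈ N.divisors, m * theta S m := by
  simp only [trace_pow_eq_ncard_closedWalks hS, ncard_closedWalks_eq_sum_card_aperiodicWalk,
    card_aperiodicWalk_eq_mul_theta]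

end Trace

theorem theta_recursion
    (n : ℕ) (hn : 1 ≤ n) (S : Matrix (Fin n) (Fin n) ℕ)
    (hS : ∀ i j, S i j = 0 ∨ S i j = 1) (N : ℕ) (hN : 0 < N) :
    (theta S N : ℚ) =
      ((Matrix.trace (S ^ N) : ℕ) : ℚ) / N -
        ∑ g ∈ N.divisors.erase 1, (1 / (g : ℚ)) * (theta S (N / g) : ℚ) := by
  have : NeZero N := ⟨hN.ne'⟩
  have hsum : ((S ^ N).trace : ℚ) / N =
      ∑ g ∈ N.divisors, (1 / (g : ℚ)) * (theta S (N / g) : ℚ) := by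
    rw [trace_pow_eq_sum_mul_theta hS, ← Nat.sum_div_divisors, Nat.cast_sum, Finset.sum_div]
    refine Finset.sum_congr rfl fun g hg => ?_
    have hg0 : (g : ℚ) ≠ 0 := by exact_mod_cast (Nat.pos_of_mem_divisors hg).ne'
    have hN0 : (N : ℚ) ≠ 0 := by exact_mod_cast hN.ne'
    rw [Nat.cast_mul, Nat.cast_div (Nat.dvd_of_mem_divisors hg) hg0]
    field_simp
  rw [hsum, ← Finset.add_sum_erase _ _ (Nat.one_mem_divisors.2 hN.ne')]
  simp only [Nat.cast_one, div_one, one_mul, Nat.div_one, add_sub_cancel_right]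
end

section
/- Let T1 be an m × m matrix over ℚ and T2 an n × n matrix over ℚ. For every positive integer N, ∑ gcd(s,t) · C(s,T1) · C(t,T2) = C(N, T1 ⊗ T2), where the sum runs over all pairs (s,t) of positive divisors of N with lcm(s,t) = N, and T1 ⊗ T2 denotes the Kronecker product. -/
/-!
By Möbius inversion, the numbers `C(n, T)` are characterised by `∑_{d ∣ n} d · C(d, T) = Tr(Tⁿ)`.
Since `gcd(s, t) · lcm(s, t) = s t`, multiplying the left-hand side of the relation by `N` turns it
into the lcm-convolution of `s ↦ s · C(s, T1)` and `t ↦ t · C(t, T2)`. Summation over divisors sends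
lcm-convolutions to pointwise products, because a pair `(s, t)` consists of divisors of `n` exactly
when `lcm(s, t) ∣ n`. Hence the relation amounts to `Tr(T1ⁿ) · Tr(T2ⁿ) = Tr((T1 ⊗ T2)ⁿ)`.
-/

open Kronecker

/-- `C(N,T) = (1/N) ∑_{g ∣ N} μ(g) · Tr(T^{N/g})` for a square matrix `T` over `ℚ`. -/
def cycleCount {α : Type*} [Fintype α] [DecidableEq α]
    (T : Matrix α α ℚ) (N : ℕ) : ℚ :=
  (∑ g ∈ N.divisors, (ArithmeticFunction.moebius g : ℚ) *
    Matrix.trace (T ^ (N / g))) / N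

section LcmConvolution

variable {R : Type*}

/-- The lcm-convolution (von Sterneck product) `n ↦ ∑_{lcm(s, t) = n} f(s) g(t)` of two arithmetic
functions, which are plain functions on `ℕ` here because only their values at positive integers
matter. The pairs range over the divisors of `n`, so the value at `n = 0` is `0`. -/
def lcmConvolution [NonUnitalNonAssocSemiring R] (f g : ℕ → R) (n : ℕ) : R :=
  ∑ p ∈ (n.divisors ×ˢ n.divisors).filter (fun p => Nat.lcm p.1 p.2 = n), f p.1 * g p.2

theorem divisors_product_filter_lcm_eq_of_dvd {d n : ℕ} (hn : n ≠ 0) (hd : d ∣ n) :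
    (n.divisors ×ˢ n.divisors).filter (fun p => Nat.lcm p.1 p.2 = d) =
      (d.divisors ×ˢ d.divisors).filter (fun p => Nat.lcm p.1 p.2 = d) := by
  have hd0 : d ≠ 0 := ne_zero_of_dvd_ne_zero hn hd
  ext ⟨s, t⟩
  simp only [Finset.mem_filter, Finset.mem_product, Nat.mem_divisors]
  constructor
  · rintro ⟨-, rfl⟩
    exact ⟨⟨⟨Nat.dvd_lcm_left s t, hd0⟩, Nat.dvd_lcm_right s t, hd0⟩, rfl⟩
  · rintro ⟨⟨⟨hs, -⟩, ht, -⟩, hst⟩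
    exact ⟨⟨⟨hs.trans hd, hn⟩, ht.trans hd, hn⟩, hst⟩

theorem sum_divisors_lcmConvolution [NonUnitalNonAssocSemiring R] (f g : ℕ → R) (n : ℕ) :
    ∑ d ∈ n.divisors, lcmConvolution f g d =
      (∑ s ∈ n.divisors, f s) * ∑ t ∈ n.divisors, g t := by
  rcases eq_or_ne n 0 with rfl | hn
  · simp
  have lcm_mem : ∀ p ∈ n.divisors ×ˢ n.divisors, Nat.lcm p.1 p.2 ∈ n.divisors := by
    intro p hp
    obtain ⟨hs, ht⟩ := Finset.mem_product.1 hp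
    exact Nat.mem_divisors.2
      ⟨Nat.lcm_dvd (Nat.dvd_of_mem_divisors hs) (Nat.dvd_of_mem_divisors ht), hn⟩
  calc ∑ d ∈ n.divisors, lcmConvolution f g d
      = ∑ d ∈ n.divisors,
          ∑ p ∈ (n.divisors ×ˢ n.divisors).filter (fun p => Nat.lcm p.1 p.2 = d),
            f p.1 * g p.2 :=
        Finset.sum_congr rfl fun d hd => by
          rw [divisors_product_filter_lcm_eq_of_dvd hn (Nat.dvd_of_mem_divisors hd),
            lcmConvolution]
    _ = ∑ p ∈ n.divisors ×ˢ n.divisors, f p.1 * g p.2 :=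
        Finset.sum_fiberwise_of_maps_to lcm_mem _
    _ = (∑ s ∈ n.divisors, f s) * ∑ t ∈ n.divisors, g t := by
        rw [Finset.sum_mul_sum, Finset.sum_product]

theorem natCast_mul_sum_gcd_mul_eq_lcmConvolution [CommSemiring R] (f g : ℕ → R) (n : ℕ) :
    n * ∑ p ∈ (n.divisors ×ˢ n.divisors).filter (fun p => Nat.lcm p.1 p.2 = n),
        (Nat.gcd p.1 p.2 : R) * f p.1 * g p.2 =
      lcmConvolution (fun s => s * f s) (fun t => t * g t) n := by
  rw [lcmConvolution, Finset.mul_sum]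
  refine Finset.sum_congr rfl fun p hp => ?_
  have gcd_mul_eq : (Nat.gcd p.1 p.2 : R) * n = p.1 * p.2 := by
    rw [← (Finset.mem_filter.1 hp).2, ← Nat.cast_mul, ← Nat.cast_mul, Nat.gcd_mul_lcm]
  calc (n : R) * (Nat.gcd p.1 p.2 * f p.1 * g p.2)
      = (Nat.gcd p.1 p.2 * n) * (f p.1 * g p.2) := by ring
    _ = p.1 * f p.1 * (p.2 * g p.2) := by rw [gcd_mul_eq, mul_mul_mul_comm]

end LcmConvolution

section Kronecker

variable {R α β : Type*} [CommSemiring R] [Fintype α] [DecidableEq α] [Fintype β] [DecidableEq β]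

theorem kronecker_pow (A : Matrix α α R) (B : Matrix β β R) (n : ℕ) :
    (A ⊗ₖ B) ^ n = (A ^ n) ⊗ₖ (B ^ n) := by
  induction n with
  | zero => simp only [pow_zero, Matrix.one_kronecker_one]
  | succ n ih => simp only [pow_succ, ih, Matrix.mul_kronecker_mul]

theorem trace_kronecker_pow (A : Matrix α α R) (B : Matrix β β R) (n : ℕ) :
    Matrix.trace ((A ⊗ₖ B) ^ n) = Matrix.trace (A ^ n) * Matrix.trace (B ^ n) := by
  rw [kronecker_pow, Matrix.trace_kronecker]

end Kronecker

section CycleCount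

variable {α β : Type*} [Fintype α] [DecidableEq α] [Fintype β] [DecidableEq β]

theorem forall_sum_divisors_mul_eq_trace_pow_iff (T : Matrix α α ℚ) (f : ℕ → ℚ) :
    (∀ n > 0, ∑ d ∈ n.divisors, d * f d = Matrix.trace (T ^ n)) ↔
      ∀ n > 0, f n = cycleCount T n := by
  rw [ArithmeticFunction.sum_eq_iff_sum_mul_moebius_eq (f := fun d : ℕ => d * f d)
    (g := fun n => Matrix.trace (T ^ n))]
  refine forall₂_congr fun n hn => ?_
  have hn0 : (n : ℚ) ≠ 0 := Nat.cast_ne_zero.2 hn.ne'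
  rw [Nat.sum_divisorsAntidiagonal
      (fun g k => (ArithmeticFunction.moebius g : ℚ) * Matrix.trace (T ^ k)),
    cycleCount, eq_div_iff hn0, mul_comm, eq_comm]

theorem sum_divisors_mul_cycleCount (T : Matrix α α ℚ) {n : ℕ} (hn : 0 < n) :
    ∑ d ∈ n.divisors, d * cycleCount T d = Matrix.trace (T ^ n) :=
  (forall_sum_divisors_mul_eq_trace_pow_iff T _).2 (fun _ _ => rfl) n hn

theorem carlitz_relation_cycleCount_general (T1 : Matrix α α ℚ) (T2 : Matrix β β ℚ)
    {N : ℕ} (hN : 0 < N) :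
    ∑ p ∈ (N.divisors ×ˢ N.divisors).filter (fun p => Nat.lcm p.1 p.2 = N),
        (Nat.gcd p.1 p.2 : ℚ) * cycleCount T1 p.1 * cycleCount T2 p.2 =
      cycleCount (T1 ⊗ₖ T2) N := by
  refine (forall_sum_divisors_mul_eq_trace_pow_iff (T1 ⊗ₖ T2) (fun n =>
    ∑ p ∈ (n.divisors ×ˢ n.divisors).filter (fun p => Nat.lcm p.1 p.2 = n),
      (Nat.gcd p.1 p.2 : ℚ) * cycleCount T1 p.1 * cycleCount T2 p.2)).1 (fun n hn => ?_) N hN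
  simp only [natCast_mul_sum_gcd_mul_eq_lcmConvolution]
  rw [sum_divisors_lcmConvolution, sum_divisors_mul_cycleCount T1 hn,
    sum_divisors_mul_cycleCount T2 hn, trace_kronecker_pow]

end CycleCount

theorem carlitz_relation_cycleCount
    (m n : ℕ) (T1 : Matrix (Fin m) (Fin m) ℚ) (T2 : Matrix (Fin n) (Fin n) ℚ)
    (N : ℕ) (hN : 0 < N) :
    ∑ p ∈ (N.divisors ×ˢ N.divisors).filter (fun p => Nat.lcm p.1 p.2 = N),
        (Nat.gcd p.1 p.2 : ℚ) * cycleCount T1 p.1 * cycleCount T2 p.2 =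
      cycleCount (T1 ⊗ₖ T2) N :=
  carlitz_relation_cycleCount_general T1 T2 hN
end

section
/- Let T be a square matrix over ℚ and l a positive integer. For every positive integer N, C(N, T^l) = ∑ (t/N) · C(t,T), where the sum runs over all positive integers t with lcm(l,t) = N·l (all such t divide N·l, so the sum is finite). -/
/-!
By Möbius inversion, `n ↦ n * C(n, T)` is the only function on the positive integers whose sum over
the divisors of each `n` is `Tr(T^n)`. As `Tr((T^l)^n) = Tr(T^(n * l))` is its sum over the
divisors of `n * l`, it is enough to group those divisors `t` according to the divisor
`lcm(l, t) / l` of `n`.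
-/

section LcmFibers

theorem lcm_div_left_dvd_iff {l t n : ℕ} (hl : 0 < l) : Nat.lcm l t / l ∣ n ↔ t ∣ n * l := by
  rw [Nat.div_dvd_iff_dvd_mul (Nat.dvd_lcm_left l t) hl, mul_comm l n, Nat.lcm_dvd_iff,
    and_iff_right (dvd_mul_left l n)]

theorem filter_divisors_lcm_eq_of_dvd (l : ℕ) {m n : ℕ} (hn : n ≠ 0) (hmn : m ∣ n) :
    n.divisors.filter (fun t => Nat.lcm l t = m) =
      m.divisors.filter (fun t => Nat.lcm l t = m) := by
  have dvd_of_lcm_eq {t : ℕ} (h : Nat.lcm l t = m) : t ∣ m := h ▸ Nat.dvd_lcm_right l t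
  rw [← Nat.divisors_filter_dvd_of_dvd hn hmn, Finset.filter_filter]
  exact Finset.filter_congr fun t _ => (and_iff_right_of_imp dvd_of_lcm_eq).symm

theorem sum_divisors_sum_filter_lcm_eq {M : Type*} [AddCommMonoid M] (f : ℕ → M) {l : ℕ}
    (hl : 0 < l) (n : ℕ) :
    ∑ d ∈ n.divisors, ∑ t ∈ (d * l).divisors.filter (fun t => Nat.lcm l t = d * l), f t =
      ∑ t ∈ (n * l).divisors, f t := by
  have lcm_div_mem_divisors : ∀ t ∈ (n * l).divisors, Nat.lcm l t / l ∈ n.divisors := by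
    intro t ht
    obtain ⟨htn, hnl⟩ := Nat.mem_divisors.1 ht
    exact Nat.mem_divisors.2 ⟨(lcm_div_left_dvd_iff hl).2 htn, left_ne_zero_of_mul hnl⟩
  rw [← Finset.sum_fiberwise_of_maps_to lcm_div_mem_divisors]
  refine Finset.sum_congr rfl fun d hd => ?_
  obtain ⟨hdn, hn⟩ := Nat.mem_divisors.1 hd
  rw [← filter_divisors_lcm_eq_of_dvd l (Nat.mul_ne_zero hn hl.ne') (Nat.mul_dvd_mul_right hdn l)]
  simp only [Nat.div_eq_iff_eq_mul_left hl (Nat.dvd_lcm_left l _)]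

end LcmFibers

section MoebiusTransform

variable {M : Type*} [AddCommGroup M]

/-- The Möbius transform `n ↦ ∑_{g ∣ n} μ(g) a(n/g)` of a sequence `a`, the inverse of taking
divisor sums. It is defined on all functions `ℕ → M` rather than on `ArithmeticFunction M`, whose
members vanish at `0`, because the sequence of traces `n ↦ Tr(T^n)` need not. -/
def moebiusTransform (a : ℕ → M) (n : ℕ) : M :=
  ∑ g ∈ n.divisors, ArithmeticFunction.moebius g • a (n / g)

theorem sum_divisors_eq_iff_moebiusTransform_eq {f a : ℕ → M} :
    (∀ n > 0, ∑ t ∈ n.divisors, f t = a n) ↔ ∀ n > 0, moebiusTransform a n = f n := by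
  simp only [ArithmeticFunction.sum_eq_iff_sum_smul_moebius_eq, moebiusTransform,
    Nat.sum_divisorsAntidiagonal fun g d => ArithmeticFunction.moebius g • a d]

theorem sum_divisors_moebiusTransform (a : ℕ → M) {n : ℕ} (hn : 0 < n) :
    ∑ t ∈ n.divisors, moebiusTransform a t = a n :=
  sum_divisors_eq_iff_moebiusTransform_eq.2 (fun _ _ => rfl) n hn

theorem moebiusTransform_comp_mul_left (a : ℕ → M) {l N : ℕ} (hl : 0 < l) (hN : 0 < N) :
    moebiusTransform (fun n => a (l * n)) N =
      ∑ t ∈ (N * l).divisors.filter (fun t => Nat.lcm l t = N * l), moebiusTransform a t := by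
  refine sum_divisors_eq_iff_moebiusTransform_eq (f := fun d =>
    ∑ t ∈ (d * l).divisors.filter (fun t => Nat.lcm l t = d * l), moebiusTransform a t).1
      (fun n hn => ?_) N hN
  rw [sum_divisors_sum_filter_lcm_eq _ hl, sum_divisors_moebiusTransform a (Nat.mul_pos hn hl),
    mul_comm]

end MoebiusTransform

theorem cycleCount_eq_moebiusTransform_div {α : Type*} [Fintype α] [DecidableEq α]
    (T : Matrix α α ℚ) (N : ℕ) :
    cycleCount T N = moebiusTransform (fun n => Matrix.trace (T ^ n)) N / N := by
  simp only [cycleCount, moebiusTransform, zsmul_eq_mul]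

theorem metropolis_rota_relation_cycleCount_general {K : Type*} [Field K] [CharZero K]
    (a : ℕ → K) {l N : ℕ} (hl : 0 < l) (hN : 0 < N) :
    moebiusTransform (fun n => a (l * n)) N / N =
      ∑ t ∈ (N * l).divisors.filter (fun t => Nat.lcm l t = N * l),
        ((t : K) / N) * (moebiusTransform a t / t) := by
  rw [moebiusTransform_comp_mul_left a hl hN, Finset.sum_div]
  refine Finset.sum_congr rfl fun t ht => ?_
  have ht0 : (t : K) ≠ 0 :=
    Nat.cast_ne_zero.2 (Nat.pos_of_mem_divisors (Finset.mem_of_mem_filter t ht)).ne'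
  rw [div_mul_div_comm, mul_comm (N : K), mul_div_mul_left _ _ ht0]

theorem metropolis_rota_relation_cycleCount
    {α : Type*} [Fintype α] [DecidableEq α] (T : Matrix α α ℚ)
    (l : ℕ) (hl : 0 < l) (N : ℕ) (hN : 0 < N) :
    cycleCount (T ^ l) N =
      ∑ t ∈ (N * l).divisors.filter (fun t => Nat.lcm l t = N * l),
        ((t : ℚ) / N) * cycleCount T t := by
  simpa only [cycleCount_eq_moebiusTransform_div, pow_mul] using
    metropolis_rota_relation_cycleCount_general (fun n => Matrix.trace (T ^ n)) hl hN
end
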